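/- Let d be the shortest-path metric of the graph K_{3,3} minus one edge, on the 6 vertices {1,2,3} ∪ {4,5,6}: explicitly, d(u,u) = 0; d(u,v) = 2 for distinct u, v in the same part; d(u,v) = 1 for u, v in different parts except the removed edge pair {3,6}, for which d(3,6) = 3. Then for every real s > 0, there do not exist a probability space and random variables X_1, …, X_6, each taking values in a finite set, such that H(X_i | X_j) + H(X_j | X_i) = s · d(i,j) for all i, j ∈ {1,…,6}, where H(·|·) denotes Shannon conditional entropy (in bits). -/

import Mathlib

/-!
Multiplying by `log 2`, the hypothesis reads `2 h{i,j} - h{i} - h{j} = s log 2 · d(i,j)`, where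
`h S` is the entropy of the joint variable `(X_i)_{i ∈ S}`. Only monotonicity and submodularity
of `h` are used.

If `j` lies on a geodesic from `i` to `k`, i.e. `d(i,j) + d(j,k) = d(i,k)`, then submodularity
forces `h{i,j,k} = h{i,k}`: `X_j` is determined by `X_i` and `X_k`. A vertex that is not an
endpoint of the removed edge is between any two vertices of the other part, and every vertex is
between the two vertices of the other part that are not endpoints of the removed edge. Hence
any two vertices of the same part determine all six variables, so `h{i,j}` equals the total entropy `T` for all three pairs of each part. With `d(i,j) = 2` on such pairs,
all six values `h{i}` equal `T - s log 2`. Then `2 h{2,5} - h{2} - h{5} ≤ 2 s log 2`,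
contradicting `d(2,5) = 3`.
-/

open MeasureTheory

/-- Shannon conditional entropy `H(X|Y)` in bits (base-2 logarithm), for random variables
with values in finite types:
`H(X|Y) = -∑_{x,y} P[X=x, Y=y] · log₂(P[X=x, Y=y] / P[Y=y])`
(with the usual convention that terms with `P[X=x, Y=y] = 0` vanish). -/
noncomputable def condEntropyBits {Ω : Type*} [MeasurableSpace Ω] (μ : Measure Ω)
    {F G : Type*} [Fintype F] [Fintype G] (X : Ω → F) (Y : Ω → G) : ℝ :=
  - ∑ x : F, ∑ y : G,
      (μ {ω | X ω = x ∧ Y ω = y}).toReal *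
        Real.logb 2 ((μ {ω | X ω = x ∧ Y ω = y}).toReal / (μ {ω | Y ω = y}).toReal)

/-- The shortest-path metric of `K_{3,3}` minus one edge, on the six vertices `Fin 6` with
parts `{0,1,2}` and `{3,4,5}` and the edge between vertices `2` and `5` removed:
`d(u,u) = 0`; `d(u,v) = 2` for distinct `u,v` in the same part; `d(u,v) = 1` for `u,v` in
different parts, except `d(2,5) = d(5,2) = 3` (the removed edge). -/
def dK33MinusEdge (u v : Fin 6) : ℝ :=
  if u = v then 0
  else if (u.val = 2 ∧ v.val = 5) ∨ (u.val = 5 ∧ v.val = 2) then 3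
  else if (u.val < 3 ↔ v.val < 3) then 2
  else 1

section JointEntropy

variable {ι : Type*} [Fintype ι] [DecidableEq ι] {α : ι → Type*} [∀ i, Fintype (α i)]
  [∀ i, DecidableEq (α i)]

/-- The marginal mass of the coordinates in `S` at the point `a`: the total `p`-mass of the
points that agree with `a` on `S`. -/
def marginal (p : (∀ i, α i) → ℝ) (S : Finset ι) (a : ∀ i, α i) : ℝ :=
  ∑ b with (∀ i ∈ S, b i = a i), p b

/-- The entropy (in nats) of the coordinates in `S` under the mass function `p`, written as
the expectation of `-log` of the marginal mass. Summing over full points rather than over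
values of the coordinates in `S` keeps all these entropies over one index type. -/
noncomputable def jointEntropy (p : (∀ i, α i) → ℝ) (S : Finset ι) : ℝ :=
  -∑ a, p a * Real.log (marginal p S a)

variable {p : (∀ i, α i) → ℝ}

lemma marginal_congr {S : Finset ι} {a b : ∀ i, α i} (h : ∀ i ∈ S, b i = a i) :
    marginal p S b = marginal p S a := by
  unfold marginal
  congr 1
  ext c
  simp only [Finset.mem_filter, Finset.mem_univ, true_and]
  exact forall₂_congr fun i hi => by rw [h i hi]

lemma marginal_nonneg (hp : ∀ a, 0 ≤ p a) (S : Finset ι) (a : ∀ i, α i) : 0 ≤ marginal p S a :=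
  Finset.sum_nonneg fun b _ => hp b

lemma marginal_anti (hp : ∀ a, 0 ≤ p a) {S T : Finset ι} (h : S ⊆ T) (a : ∀ i, α i) :
    marginal p T a ≤ marginal p S a := by
  unfold marginal
  refine Finset.sum_le_sum_of_subset_of_nonneg ?_ fun b _ _ => hp b
  intro b hb
  simp only [Finset.mem_filter, Finset.mem_univ, true_and] at hb ⊢
  exact fun i hi => hb i (h hi)

lemma le_marginal (hp : ∀ a, 0 ≤ p a) (S : Finset ι) (a : ∀ i, α i) : p a ≤ marginal p S a :=
  Finset.single_le_sum (f := p) (fun b _ => hp b) (by simp)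

lemma jointEntropy_mono (hp : ∀ a, 0 ≤ p a) {S T : Finset ι} (h : S ⊆ T) :
    jointEntropy p S ≤ jointEntropy p T := by
  unfold jointEntropy
  refine neg_le_neg (Finset.sum_le_sum fun a _ => ?_)
  rcases (hp a).eq_or_lt with h0 | h0
  · simp [← h0]
  · exact mul_le_mul_of_nonneg_left
      (Real.log_le_log (h0.trans_le (le_marginal hp T a)) (marginal_anti hp h a)) h0.le

/-- The points that agree with `b` on `S` and with `c` on `T` form at most one class of points
agreeing on `S ∪ T`, and they exist only if `b` and `c` agree on `S ∩ T`. -/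
lemma sum_glue_le (hp : ∀ a, 0 ≤ p a) (S T : Finset ι) (b c : ∀ i, α i) :
    (∑ a, if (∀ i ∈ S, b i = a i) ∧ (∀ i ∈ T, c i = a i) then
        p a / (marginal p (S ∪ T) a * marginal p (S ∩ T) a) else 0) ≤
      if (∀ i ∈ S ∩ T, c i = b i) then 1 / marginal p (S ∩ T) b else 0 := by
  by_cases hex : ∃ a₀ : ∀ i, α i, (∀ i ∈ S, b i = a₀ i) ∧ (∀ i ∈ T, c i = a₀ i)
  · obtain ⟨a₀, hb, hc⟩ := hex
    have hbc : ∀ i ∈ S ∩ T, c i = b i := fun i hi => by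
      rw [hb i (Finset.mem_inter.1 hi).1, hc i (Finset.mem_inter.1 hi).2]
    rw [if_pos hbc]
    have key : ∀ a, (if (∀ i ∈ S, b i = a i) ∧ (∀ i ∈ T, c i = a i) then
        p a / (marginal p (S ∪ T) a * marginal p (S ∩ T) a) else 0) ≤
        if (∀ i ∈ S ∪ T, a i = a₀ i) then
          p a * (1 / (marginal p (S ∪ T) a₀ * marginal p (S ∩ T) b)) else 0 := by
      intro a
      by_cases h : (∀ i ∈ S, b i = a i) ∧ (∀ i ∈ T, c i = a i)
      · have h1 : ∀ i ∈ S ∪ T, a i = a₀ i := by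
          intro i hi
          rcases Finset.mem_union.1 hi with hi | hi
          · rw [← h.1 i hi, hb i hi]
          · rw [← h.2 i hi, hc i hi]
        have h2 : ∀ i ∈ S ∩ T, a i = b i := fun i hi =>
          (h.1 i (Finset.mem_inter.1 hi).1).symm
        rw [if_pos h, if_pos h1, marginal_congr h1, marginal_congr h2, mul_one_div]
      · rw [if_neg h]
        split_ifs
        · have := marginal_nonneg hp (S ∪ T) a₀
          have := marginal_nonneg hp (S ∩ T) b
          have := hp a
          positivity
        · exact le_rfl
    refine (Finset.sum_le_sum fun a _ => key a).trans ?_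
    rw [← Finset.sum_filter, ← Finset.sum_mul]
    change marginal p (S ∪ T) a₀ * _ ≤ _
    have h0 := marginal_nonneg hp (S ∩ T) b
    rcases (marginal_nonneg hp (S ∪ T) a₀).eq_or_lt with h | h
    · rw [← h, zero_mul]
      positivity
    · rw [one_div, mul_inv, ← mul_assoc, mul_inv_cancel₀ h.ne', one_mul, one_div]
  · rw [Finset.sum_eq_zero fun a _ => if_neg fun h => hex ⟨a, h⟩]
    split_ifs
    · exact one_div_nonneg.2 (marginal_nonneg hp _ _)
    · exact le_rfl

/-- The function `p_S p_T / p_{S ∩ T}` has total mass at most that of `p`, expressed here as a sum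
weighted by `p / p_{S ∪ T}`; through `log x ≤ x - 1` this yields submodularity. -/
lemma sum_marginal_ratio_le (hp : ∀ a, 0 ≤ p a) (S T : Finset ι) :
    ∑ a, p a * (marginal p S a * marginal p T a /
      (marginal p (S ∪ T) a * marginal p (S ∩ T) a)) ≤ ∑ a, p a := by
  have h1 : ∀ a, p a * (marginal p S a * marginal p T a /
      (marginal p (S ∪ T) a * marginal p (S ∩ T) a)) =
      ∑ b, ∑ c, p b * p c * (if (∀ i ∈ S, b i = a i) ∧ (∀ i ∈ T, c i = a i) then
        p a / (marginal p (S ∪ T) a * marginal p (S ∩ T) a) else 0) := by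
    intro a
    have e : p a * (marginal p S a * marginal p T a /
      (marginal p (S ∪ T) a * marginal p (S ∩ T) a)) =
      (marginal p S a * marginal p T a) *
        (p a / (marginal p (S ∪ T) a * marginal p (S ∩ T) a)) := by ring
    rw [e]
    generalize p a / (marginal p (S ∪ T) a * marginal p (S ∩ T) a) = w
    unfold marginal
    rw [Finset.sum_filter, Finset.sum_filter, Finset.sum_mul_sum, Finset.sum_mul]
    refine Finset.sum_congr rfl fun b _ => ?_
    rw [Finset.sum_mul]
    refine Finset.sum_congr rfl fun c _ => ?_
    rw [ite_and]
    split_ifs <;> ring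
  simp_rw [h1]
  rw [Finset.sum_comm]
  refine Finset.sum_le_sum fun b _ => ?_
  rw [Finset.sum_comm]
  have h2 : ∀ c, ∑ a, p b * p c * (if (∀ i ∈ S, b i = a i) ∧ (∀ i ∈ T, c i = a i) then
        p a / (marginal p (S ∪ T) a * marginal p (S ∩ T) a) else 0) ≤
      (if (∀ i ∈ S ∩ T, c i = b i) then p c else 0) * (p b * (1 / marginal p (S ∩ T) b)) := by
    intro c
    rw [← Finset.mul_sum]
    refine (mul_le_mul_of_nonneg_left (sum_glue_le hp S T b c)
      (mul_nonneg (hp b) (hp c))).trans (le_of_eq ?_)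
    split_ifs <;> ring
  refine (Finset.sum_le_sum fun c _ => h2 c).trans ?_
  rw [← Finset.sum_mul, ← Finset.sum_filter]
  change marginal p (S ∩ T) b * _ ≤ _
  rcases (marginal_nonneg hp (S ∩ T) b).eq_or_lt with h | h
  · rw [← h, zero_mul]
    exact hp b
  · apply le_of_eq
    field_simp

lemma jointEntropy_submodular (hp : ∀ a, 0 ≤ p a) (S T : Finset ι) :
    jointEntropy p (S ∪ T) + jointEntropy p (S ∩ T) ≤ jointEntropy p S + jointEntropy p T := by
  have key : ∑ a, (p a * Real.log (marginal p S a) + p a * Real.log (marginal p T a)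
      - p a * Real.log (marginal p (S ∪ T) a) - p a * Real.log (marginal p (S ∩ T) a)) ≤
      ∑ a, (p a * (marginal p S a * marginal p T a /
        (marginal p (S ∪ T) a * marginal p (S ∩ T) a)) - p a) := by
    refine Finset.sum_le_sum fun a _ => ?_
    rcases (hp a).eq_or_lt with h0 | h0
    · simp [← h0]
    · have hS := h0.trans_le (le_marginal hp S a)
      have hT := h0.trans_le (le_marginal hp T a)
      have hU := h0.trans_le (le_marginal hp (S ∪ T) a)
      have hI := h0.trans_le (le_marginal hp (S ∩ T) a)
      have hl := Real.log_le_sub_one_of_pos (div_pos (mul_pos hS hT) (mul_pos hU hI))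
      rw [Real.log_div (mul_pos hS hT).ne' (mul_pos hU hI).ne', Real.log_mul hS.ne' hT.ne',
        Real.log_mul hU.ne' hI.ne'] at hl
      have := mul_le_mul_of_nonneg_left hl h0.le
      linarith
  simp only [Finset.sum_sub_distrib, Finset.sum_add_distrib] at key
  have := sum_marginal_ratio_le hp S T
  unfold jointEntropy
  linarith

end JointEntropy

/-- Sums of the joint mass function of `X_1, …, X_6` are probabilities of events; with `Q` the
agreement with a point on `S`, this computes the marginals. -/
lemma marginal_eq_measureReal {Ω : Type*} [MeasurableSpace Ω] (μ : Measure Ω)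
    [IsProbabilityMeasure μ] {k : Fin 6 → ℕ} (X : ∀ i : Fin 6, Ω → Fin (k i))
    (hX : ∀ i, Measurable (X i)) (Q : (∀ i, Fin (k i)) → Prop) [DecidablePred Q] :
    ∑ b with Q b, (μ {ω | ∀ i, X i ω = b i}).toReal = (μ {ω | Q fun i => X i ω}).toReal := by
  have hm : Measurable fun ω i => X i ω := measurable_pi_lambda _ hX
  have h := sum_measureReal_preimage_singleton (μ := μ) (f := fun ω i => X i ω)
    (Finset.univ.filter Q) (fun y _ => hm (measurableSet_singleton y))
  have e1 : (fun ω i => X i ω) ⁻¹' (↑(Finset.univ.filter Q) : Set (∀ i, Fin (k i))) =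
      {ω | Q fun i => X i ω} := by ext; simp
  rw [e1] at h
  refine Eq.trans (Finset.sum_congr rfl fun b _ => ?_) h
  unfold Measure.real
  congr 2
  ext ω
  simp [funext_iff]

/-- `H(X_i | X_j) = h{i,j} - h{j}`, up to the change of logarithm base. -/
lemma condEntropyBits_eq {Ω : Type*} [MeasurableSpace Ω] (μ : Measure Ω)
    [IsProbabilityMeasure μ] {k : Fin 6 → ℕ} (X : ∀ i : Fin 6, Ω → Fin (k i))
    (hX : ∀ i, Measurable (X i)) (i j : Fin 6) :
    condEntropyBits μ (X i) (X j) * Real.log 2 =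
      jointEntropy (fun a : ∀ i, Fin (k i) => (μ {ω | ∀ i, X i ω = a i}).toReal) {i, j} -
      jointEntropy (fun a : ∀ i, Fin (k i) => (μ {ω | ∀ i, X i ω = a i}).toReal) {j} := by
  set p := fun a : ∀ i, Fin (k i) => (μ {ω | ∀ i, X i ω = a i}).toReal with hpdef
  have hp : ∀ a, 0 ≤ p a := fun a => ENNReal.toReal_nonneg
  have m2 : ∀ a, marginal p {i, j} a = (μ {ω | X i ω = a i ∧ X j ω = a j}).toReal := by
    intro a
    have := marginal_eq_measureReal μ X hX fun b => ∀ l ∈ ({i, j} : Finset (Fin 6)), b l = a l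
    simpa [marginal, hpdef] using this
  have m1 : ∀ a, marginal p {j} a = (μ {ω | X j ω = a j}).toReal := by
    intro a
    have := marginal_eq_measureReal μ X hX fun b => ∀ l ∈ ({j} : Finset (Fin 6)), b l = a l
    simpa [marginal, hpdef] using this
  -- Expectations of functions of `(X_i, X_j)` may be computed over full points.
  have expect : ∀ g : Fin (k i) → Fin (k j) → ℝ,
      ∑ x, ∑ y, (μ {ω | X i ω = x ∧ X j ω = y}).toReal * g x y = ∑ a, p a * g (a i) (a j) := by
    intro g
    rw [← Fintype.sum_prod_type', ← Finset.sum_fiberwise (s := Finset.univ)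
      (g := fun a : ∀ l, Fin (k l) => (a i, a j))]
    refine Finset.sum_congr rfl fun xy _ => ?_
    have := marginal_eq_measureReal μ X hX fun b => (b i, b j) = xy
    have e : {ω | X i ω = xy.1 ∧ X j ω = xy.2} = {ω | (X i ω, X j ω) = xy} := by
      ext ω
      simp [Prod.ext_iff]
    rw [e, ← this, Finset.sum_mul]
    refine Finset.sum_congr rfl fun b hb => ?_
    have hb := (Finset.mem_filter.1 hb).2
    rw [← hb]
  unfold condEntropyBits
  rw [expect fun x y => Real.logb 2 ((μ {ω | X i ω = x ∧ X j ω = y}).toReal /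
    (μ {ω | X j ω = y}).toReal)]
  unfold jointEntropy
  rw [neg_sub_neg, ← Finset.sum_sub_distrib, neg_mul, Finset.sum_mul, ← Finset.sum_neg_distrib]
  refine Finset.sum_congr rfl fun a _ => ?_
  rw [← m2, ← m1]
  rcases (hp a).eq_or_lt with h0 | h0
  · simp [← h0]
  · have h2 := h0.trans_le (le_marginal hp {i, j} a)
    have h1 := h0.trans_le (le_marginal hp {j} a)
    have hl : Real.log 2 ≠ 0 := (Real.log_pos one_lt_two).ne'
    rw [Real.logb, Real.log_div h2.ne' h1.ne']
    field_simp
    ring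

/-- `dK33MinusEdge` with values in `ℕ`, so that its instances can be decided. -/
def natDist (u v : Fin 6) : ℕ :=
  if u = v then 0
  else if (u.val = 2 ∧ v.val = 5) ∨ (u.val = 5 ∧ v.val = 2) then 3
  else if (u.val < 3 ↔ v.val < 3) then 2
  else 1

lemma dK33MinusEdge_eq (u v : Fin 6) : dK33MinusEdge u v = natDist u v := by
  unfold dK33MinusEdge natDist
  split_ifs <;> simp

/-- The vertex `j` is not in `S` and lies on a geodesic between two vertices of `S`. -/
abbrev NewBetween (j : Fin 6) (S : Finset (Fin 6)) : Prop :=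
  j ∉ S ∧ ∃ i ∈ S, ∃ k ∈ S, i ≠ k ∧ natDist i j + natDist j k = natDist i k

/-- The metric of `K_{3,3}` minus an edge is not induced by a monotone submodular set function. -/
lemma not_submodular_K33 {t : ℝ} (ht : 0 < t) (h : Finset (Fin 6) → ℝ)
    (mono : ∀ {S T}, S ⊆ T → h S ≤ h T)
    (sub : ∀ S T, h (S ∪ T) + h (S ∩ T) ≤ h S + h T)
    (hd : ∀ i j, 2 * h {i, j} - h {i} - h {j} = t * dK33MinusEdge i j) : False := by
  -- A vertex on a geodesic between two members of `S` adds nothing to `S`.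
  have step : ∀ (j : Fin 6) (S : Finset (Fin 6)), NewBetween j S → h (insert j S) ≤ h S := by
    rintro j S ⟨hj, i, hi, k, hk, hik, htri⟩
    have s1 := sub {i, j} {j, k}
    rw [show ({i, j} ∩ {j, k} : Finset (Fin 6)) = {j} by ext; simp; grind,
      show ({i, j} ∪ {j, k} : Finset (Fin 6)) = {i, j, k} by ext; simp] at s1
    have s2 := sub S {i, j, k}
    rw [show S ∪ {i, j, k} = insert j S by ext; simp; grind,
      show S ∩ {i, j, k} = {i, k} by ext; simp; grind] at s2
    have d1 := hd i j
    have d2 := hd j k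
    have d3 := hd i k
    rw [dK33MinusEdge_eq] at d1 d2 d3
    rw [← htri] at d3
    push_cast at d3
    linarith
  -- Four geodesic steps generate all six vertices from a pair.
  have total : ∀ (S : Finset (Fin 6)) (v w x y : Fin 6),
      NewBetween v S ∧ NewBetween w (insert v S) ∧ NewBetween x (insert w (insert v S)) ∧
      NewBetween y (insert x (insert w (insert v S))) ∧
      insert y (insert x (insert w (insert v S))) = Finset.univ → h S = h Finset.univ := by
    rintro S v w x y ⟨h1, h2, h3, h4, hu⟩
    have h1 := step _ _ h1
    have h2 := step _ _ h2
    have h3 := step _ _ h3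
    have h4 := step _ _ h4
    rw [hu] at h4
    exact le_antisymm (mono (Finset.subset_univ S)) (by linarith)
  have t01 := total {0, 1} 3 4 5 2 (by decide)
  have t02 := total {0, 2} 3 4 1 5 (by decide)
  have t12 := total {1, 2} 3 4 0 5 (by decide)
  have t34 := total {3, 4} 0 1 2 5 (by decide)
  have t35 := total {3, 5} 0 1 4 2 (by decide)
  have t45 := total {4, 5} 0 1 3 2 (by decide)
  have e01 := hd 0 1
  have e02 := hd 0 2
  have e12 := hd 1 2
  have e34 := hd 3 4
  have e35 := hd 3 5
  have e45 := hd 4 5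
  have e25 := hd 2 5
  have t25 : h {2, 5} ≤ h Finset.univ := mono (Finset.subset_univ _)
  rw [dK33MinusEdge_eq, show natDist _ _ = 2 by decide] at e01 e02 e12 e34 e35 e45
  rw [dK33MinusEdge_eq, show natDist 2 5 = 3 by decide] at e25
  push_cast at e01 e02 e12 e34 e35 e45 e25
  linarith

/-- For every scale `s > 0`, there is no probability space carrying finitely-valued random
variables `X_1, …, X_6` such that `H(X_i|X_j) + H(X_j|X_i) = s · d(i,j)` for all `i, j`,
where `d` is the path metric of `K_{3,3}` minus one edge. -/
theorem K33_minus_edge_not_scaled_information_distance (s : ℝ) (hs : 0 < s) :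
    ¬ ∃ (Ω : Type) (mΩ : MeasurableSpace Ω) (μ : @Measure Ω mΩ)
        (k : Fin 6 → ℕ) (X : ∀ i : Fin 6, Ω → Fin (k i)),
        @IsProbabilityMeasure Ω mΩ μ ∧
        (∀ i : Fin 6, @Measurable Ω (Fin (k i)) mΩ inferInstance (X i)) ∧
        (∀ i j : Fin 6,
          @condEntropyBits Ω mΩ μ _ _ _ _ (X i) (X j) +
            @condEntropyBits Ω mΩ μ _ _ _ _ (X j) (X i) = s * dK33MinusEdge i j) := by
  rintro ⟨Ω, mΩ, μ, k, X, hμ, hX, hd⟩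
  have hp : ∀ a : (∀ i, Fin (k i)), 0 ≤ (μ {ω | ∀ i, X i ω = a i}).toReal :=
    fun a => ENNReal.toReal_nonneg
  refine not_submodular_K33 (mul_pos hs (Real.log_pos one_lt_two))
    (jointEntropy fun a : ∀ i, Fin (k i) => (μ {ω | ∀ i, X i ω = a i}).toReal)
    (jointEntropy_mono hp) (jointEntropy_submodular hp) fun i j => ?_
  have h1 := condEntropyBits_eq μ X hX i j
  have h2 := condEntropyBits_eq μ X hX j i
  rw [Finset.pair_comm] at h2
  have h3 := congrArg (· * Real.log 2) (hd i j)
  simp only [add_mul] at h3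
  rw [h1, h2] at h3
  linarith
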